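/- arXiv:1809.08818 — 2 statements merged into one kernel-verified Lean document; each statement's English description precedes it below -/
import Mathlib

section
/- Let d ≥ 1 and let g_min, K_min, B > 0. Then there exist λ > 0 and c₀ > 0, depending only on g_min, K_min, B and d, such that the following holds for every open set 𝒪 ⊆ ℝ^d: if f : 𝒪 → ℝ is continuously differentiable with K_min ≤ f(x) ≤ B and ‖∇f(x)‖ ≤ B for all x ∈ 𝒪, and u : 𝒪 → ℝ is twice continuously differentiable with |Δu(x)| ≤ B for all x ∈ 𝒪, and f(x)Δu(x) + ⟨∇f(x), ∇u(x)⟩ ≥ g_min for all x ∈ 𝒪, then (1/2)Δu(x) + λ‖∇u(x)‖² ≥ c₀ for all x ∈ 𝒪. -/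
open scoped RealInnerProductSpace

/-- The Laplacian `Δu(x)`, the trace of the second derivative. -/
noncomputable def lap (d : ℕ) (u : EuclideanSpace ℝ (Fin d) → ℝ)
    (x : EuclideanSpace ℝ (Fin d)) : ℝ :=
  ∑ i : Fin d, iteratedFDeriv ℝ 2 u x ![EuclideanSpace.single i 1, EuclideanSpace.single i 1]

section InnerProductSpace

variable {E : Type*} [SeminormedAddCommGroup E] [InnerProductSpace ℝ E]

theorem real_inner_le_add_norm_sq_div_mul_norm_sq {δ : ℝ} (hδ : 0 < δ) (v w : E) :
    ⟪v, w⟫ ≤ δ + ‖v‖ ^ 2 / (4 * δ) * ‖w‖ ^ 2 := by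
  have young : 2 * 1 * (‖v‖ * ‖w‖) ≤ 2 * δ * 1 ^ 2 + (2 * δ)⁻¹ * (‖v‖ * ‖w‖) ^ 2 :=
    two_mul_le_add_mul_sq (by positivity)
  calc ⟪v, w⟫ ≤ ‖v‖ * ‖w‖ := real_inner_le_norm v w
    _ ≤ (2 * δ * 1 ^ 2 + (2 * δ)⁻¹ * (‖v‖ * ‖w‖) ^ 2) / 2 := by linarith
    _ = δ + ‖v‖ ^ 2 / (4 * δ) * ‖w‖ ^ 2 := by
      field_simp
      ring

/-- At a fixed point, `a`, `L`, `v` and `w` stand for `f`, `Δu`, `∇f` and `∇u`. Young's inequality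
spends the part `δ` of `g` on absorbing the drift `⟪v, w⟫` into a multiple of `‖w‖ ^ 2`; dividing by
`2 * a` then leaves a lower bound that can be chosen arbitrarily close to `g / (2 * M)`. -/
theorem pointwise_positivity_estimate_general {g δ K M N a L : ℝ} {v w : E}
    (hδ : 0 < δ) (hδg : δ ≤ g) (hK : 0 < K) (hKa : K ≤ a) (haM : a ≤ M) (hv : ‖v‖ ≤ N)
    (h : g ≤ a * L + ⟪v, w⟫) :
    (g - δ) / (2 * M) ≤ (1 / 2) * L + N ^ 2 / (8 * δ * K) * ‖w‖ ^ 2 := by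
  have ha : 0 < a := hK.trans_le hKa
  have absorbed : g - δ ≤ a * L + ‖v‖ ^ 2 / (4 * δ) * ‖w‖ ^ 2 := by
    linarith [real_inner_le_add_norm_sq_div_mul_norm_sq hδ v w]
  calc (g - δ) / (2 * M) ≤ (g - δ) / (2 * a) :=
      div_le_div_of_nonneg_left (sub_nonneg.2 hδg) (by positivity) (by gcongr)
    _ ≤ (a * L + ‖v‖ ^ 2 / (4 * δ) * ‖w‖ ^ 2) / (2 * a) := by gcongr
    _ = (1 / 2) * L + ‖v‖ ^ 2 / (8 * δ * a) * ‖w‖ ^ 2 := by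
      field_simp
      ring
    _ ≤ (1 / 2) * L + N ^ 2 / (8 * δ * K) * ‖w‖ ^ 2 := by gcongr

end InnerProductSpace

theorem pointwise_positivity_estimate (d : ℕ) (hd : 1 ≤ d)
    (gmin Kmin B : ℝ) (hg : 0 < gmin) (hK : 0 < Kmin) (hB : 0 < B) :
    ∃ lam c₀ : ℝ, 0 < lam ∧ 0 < c₀ ∧
      ∀ O : Set (EuclideanSpace ℝ (Fin d)), IsOpen O →
      ∀ f u : EuclideanSpace ℝ (Fin d) → ℝ,
        ContDiffOn ℝ 1 f O →
        (∀ x ∈ O, Kmin ≤ f x ∧ f x ≤ B ∧ ‖gradient f x‖ ≤ B) →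
        ContDiffOn ℝ 2 u O →
        (∀ x ∈ O, |lap d u x| ≤ B) →
        (∀ x ∈ O, gmin ≤ f x * lap d u x + ⟪gradient f x, gradient u x⟫) →
        ∀ x ∈ O, c₀ ≤ (1 / 2) * lap d u x + lam * ‖gradient u x‖ ^ 2 := by
  refine ⟨B ^ 2 / (8 * (gmin / 2) * Kmin), (gmin - gmin / 2) / (2 * B), by positivity,
    div_pos (sub_pos.2 (half_lt_self hg)) (by positivity), ?_⟩
  intro O _ f u _ hf _ _ hfu x hx
  obtain ⟨hKf, hfB, hgrad⟩ := hf x hx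
  exact pointwise_positivity_estimate_general (half_pos hg) (half_le_self hg.le) hK hKf hfB hgrad
    (hfu x hx)
end

section
/- Let d ≥ 1 and let 𝒪 ⊆ ℝ^d be a bounded nonempty open set with smooth boundary. Then there exists a constant c > 0 depending only on 𝒪 and d such that the following holds: for every continuous bounded f : 𝒪̄ → ℝ with f ≥ 0, every g_min > 0, every continuous g : ∂𝒪 → ℝ with g(x) ≥ g_min for all x ∈ ∂𝒪, and every classical solution u of Δu = 2fu on 𝒪 with u = g on ∂𝒪, one has inf_{x∈𝒪} u(x) ≥ g_min · exp(−c · sup_{x∈𝒪}|f(x)|); in particular u > 0 on 𝒪. -/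
open MeasureTheory

/-- `O` has smooth boundary: there is a smooth defining function `ρ` with
`O = {ρ < 0}`, `∂O = {ρ = 0}` and `∇ρ ≠ 0` on `∂O`. -/
def HasSmoothBoundary (d : ℕ) (O : Set (EuclideanSpace ℝ (Fin d))) : Prop :=
  ∃ ρ : EuclideanSpace ℝ (Fin d) → ℝ, ContDiff ℝ (⊤ : ℕ∞) ρ ∧
    O = {x | ρ x < 0} ∧ frontier O = {x | ρ x = 0} ∧
    ∀ x ∈ frontier O, fderiv ℝ ρ x ≠ 0

/-- Classical solution of `Δu = 2fu` on `O` with boundary values `u = g` on `∂O`: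
a function `u ∈ C²(O) ∩ C(O̅)` with `Δu − 2fu = 0` pointwise on `O` and `u = g`
on the boundary. -/
def IsSolutionSchrBVP (d : ℕ) (O : Set (EuclideanSpace ℝ (Fin d)))
    (f g u : EuclideanSpace ℝ (Fin d) → ℝ) : Prop :=
  ContDiffOn ℝ 2 u O ∧ ContinuousOn u (closure O) ∧
    (∀ x ∈ O, lap d u x - 2 * f x * u x = 0) ∧
    ∀ x ∈ frontier O, u x = g x

/-!
The Gaussian `v y = a * exp (N * (‖y‖ ^ 2 - R ^ 2))` satisfies `Δv ≥ 2dNv`, so for `dN ≥ sup f` it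
is a subsolution of `Δv = 2fv`, and it is at most `a` on the ball of radius `R`. If that ball
contains `O`, then `u - v` is a supersolution which is nonnegative on the boundary, so `u ≥ v` by
the minimum principle. Taking `N = sup f / d` and using `‖y‖ ^ 2 ≥ 0` leaves the constant
`c = R ^ 2 / d`, a bound for the mean exit time from `O` of a Brownian motion.
-/

open Filter Topology InnerProductSpace Laplacian

theorem deriv_deriv_nonneg_of_isLocalMin {h : ℝ → ℝ} {a : ℝ} (hmin : IsLocalMin h a)
    (hcont : ContinuousAt h a) : 0 ≤ deriv (deriv h) a := by
  by_contra! hneg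
  have hmax : IsLocalMax h a := isLocalMax_of_deriv_deriv_neg hneg hmin.deriv_eq_zero hcont
  have hconst : h =ᶠ[𝓝 a] fun _ => h a := by
    filter_upwards [hmin, hmax] with t hge hle using le_antisymm hle hge
  have hzero : deriv (deriv h) a = 0 := by simpa using hconst.deriv.deriv_eq
  exact hneg.ne hzero

section Line

variable {E F : Type*} [NormedAddCommGroup E] [NormedSpace ℝ E] [NormedAddCommGroup F]
  [NormedSpace ℝ F]

theorem tendsto_add_smul_nhds_zero (x e : E) :
    Tendsto (fun t : ℝ => x + t • e) (𝓝 0) (𝓝 x) :=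
  Continuous.tendsto' (by fun_prop) _ _ (by simp)

theorem deriv_deriv_comp_add_smul {u : E → F} {x : E} (hu : ContDiffAt ℝ 2 u x) (e : E) :
    deriv (deriv fun t : ℝ => u (x + t • e)) 0 = iteratedFDeriv ℝ 2 u x ![e, e] := by
  have hfirst : deriv (fun t : ℝ => u (x + t • e)) =ᶠ[𝓝 0]
      fun t => iteratedFDeriv ℝ 1 u (x + t • e) fun _ => e := by
    filter_upwards [(tendsto_add_smul_nhds_zero x e).eventually (hu.eventually (by simp))]
      with t ht
    rw [(ht.differentiableAt (by simp)).deriv_comp_add_smul, iteratedFDeriv_one_apply]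
  have hsecond := ContDiffAt.deriv_fderiv_add_smul (n := 1) (t := (0 : ℝ)) (y := e)
    (by simpa [one_add_one_eq_two] using hu)
  rw [hfirst.deriv_eq, hsecond, zero_smul, add_zero, iteratedFDeriv_two_apply,
    iteratedFDeriv_two_apply]
  rfl

end Line

section NormSq

variable {E : Type*} [NormedAddCommGroup E] [InnerProductSpace ℝ E]

theorem hasDerivAt_norm_sq_add_smul (x e : E) (t : ℝ) :
    HasDerivAt (fun t : ℝ => ‖x + t • e‖ ^ 2) (2 * ⟪x + t • e, e⟫_ℝ) t :=
  (((hasDerivAt_id t).smul_const e).const_add x).norm_sq.congr_deriv (by simp)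

theorem deriv_deriv_comp_norm_sq_add_smul {φ : ℝ → ℝ} {x : E}
    (hφ : ContDiffAt ℝ 2 φ (‖x‖ ^ 2)) (e : E) :
    deriv (deriv fun t : ℝ => φ (‖x + t • e‖ ^ 2)) 0 =
      2 * ‖e‖ ^ 2 * deriv φ (‖x‖ ^ 2) + 4 * ⟪x, e⟫_ℝ ^ 2 * deriv (deriv φ) (‖x‖ ^ 2) := by
  have hnorm : Tendsto (fun t : ℝ => ‖x + t • e‖ ^ 2) (𝓝 0) (𝓝 (‖x‖ ^ 2)) :=
    (tendsto_add_smul_nhds_zero x e).norm.pow 2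
  have hfirst : deriv (fun t : ℝ => φ (‖x + t • e‖ ^ 2)) =ᶠ[𝓝 0]
      fun t => deriv φ (‖x + t • e‖ ^ 2) * (2 * ⟪x + t • e, e⟫_ℝ) := by
    filter_upwards [hnorm.eventually (hφ.eventually (by simp))] with t ht
    exact ((ht.differentiableAt (by simp)).hasDerivAt.comp t
      (hasDerivAt_norm_sq_add_smul x e t)).deriv
  have hdiff : DifferentiableAt ℝ (deriv φ) (‖x + (0 : ℝ) • e‖ ^ 2) := by
    simpa using (hφ.derivWithin (m := 1) (by norm_num)).differentiableAt (by simp)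
  have hinner : HasDerivAt (fun t : ℝ => 2 * ⟪x + t • e, e⟫_ℝ) (2 * ‖e‖ ^ 2) 0 := by
    refine ((((hasDerivAt_id (0 : ℝ)).smul_const e).const_add x).inner ℝ
      (hasDerivAt_const 0 e)).const_mul 2 |>.congr_deriv ?_
    simp
  have hsecond :=
    (hdiff.hasDerivAt.comp (0 : ℝ) (hasDerivAt_norm_sq_add_smul x e 0)).mul hinner
  rw [hfirst.deriv_eq]
  refine hsecond.deriv.trans ?_
  simp only [Function.comp_apply, zero_smul, add_zero]
  ring

theorem contDiff_gaussian {n : WithTop ℕ∞} (a N R : ℝ) :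
    ContDiff ℝ n fun y : E => a * Real.exp (N * (‖y‖ ^ 2 - R)) :=
  contDiff_const.mul (contDiff_const.mul ((contDiff_norm_sq ℝ).sub contDiff_const)).exp

end NormSq

section Laplacian

variable {E : Type*} [NormedAddCommGroup E] [InnerProductSpace ℝ E] [FiniteDimensional ℝ E]

theorem laplacian_eq_sum_deriv_deriv {F ι : Type*} [NormedAddCommGroup F] [NormedSpace ℝ F]
    [Fintype ι] (b : OrthonormalBasis ι ℝ E) {u : E → F} {x : E} (hu : ContDiffAt ℝ 2 u x) :
    Δ u x = ∑ i, deriv (deriv fun t : ℝ => u (x + t • b i)) 0 := by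
  simp only [laplacian_eq_iteratedFDeriv_orthonormalBasis u b, deriv_deriv_comp_add_smul hu]

theorem laplacian_nonneg_of_isLocalMin {u : E → ℝ} {x : E} (hmin : IsLocalMin u x)
    (hu : ContDiffAt ℝ 2 u x) : 0 ≤ Δ u x := by
  rw [laplacian_eq_sum_deriv_deriv (stdOrthonormalBasis ℝ E) hu]
  refine Finset.sum_nonneg fun i _ => deriv_deriv_nonneg_of_isLocalMin ?_ ?_
  · simpa [IsLocalMin, IsMinFilter] using (tendsto_add_smul_nhds_zero x _).eventually hmin
  · exact ContinuousAt.comp_of_eq hu.continuousAt (by fun_prop) (by simp)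

theorem laplacian_comp_norm_sq {φ : ℝ → ℝ} {x : E} (hφ : ContDiffAt ℝ 2 φ (‖x‖ ^ 2)) :
    Δ (fun y : E => φ (‖y‖ ^ 2)) x = 2 * Module.finrank ℝ E * deriv φ (‖x‖ ^ 2) +
      4 * ‖x‖ ^ 2 * deriv (deriv φ) (‖x‖ ^ 2) := by
  set b := stdOrthonormalBasis ℝ E
  have hcomp : ContDiffAt ℝ 2 (fun y : E => φ (‖y‖ ^ 2)) x :=
    hφ.comp x (contDiff_norm_sq ℝ).contDiffAt
  rw [laplacian_eq_sum_deriv_deriv b hcomp]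
  simp only [deriv_deriv_comp_norm_sq_add_smul hφ, b.norm_eq_one, Finset.sum_add_distrib,
    ← Finset.sum_mul, ← Finset.mul_sum, b.sum_sq_inner_left]
  simp [mul_comm]

theorem laplacian_mul_sub_norm_sq (ε R : ℝ) (x : E) :
    Δ (fun y : E => ε * (R - ‖y‖ ^ 2)) x = -(2 * Module.finrank ℝ E * ε) := by
  have hderiv : deriv (fun s => ε * (R - s)) = fun _ => -ε := by
    ext s
    simp
  rw [laplacian_comp_norm_sq (φ := fun s => ε * (R - s)) (by fun_prop), hderiv]
  simp

theorem laplacian_gaussian (a N R : ℝ) (x : E) :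
    Δ (fun y : E => a * Real.exp (N * (‖y‖ ^ 2 - R))) x =
      2 * N * (Module.finrank ℝ E + 2 * N * ‖x‖ ^ 2) *
        (a * Real.exp (N * (‖x‖ ^ 2 - R))) := by
  have hderiv (C : ℝ) : deriv (fun s => C * Real.exp (N * (s - R))) =
      fun s => C * N * Real.exp (N * (s - R)) := by
    ext s
    have hlin : HasDerivAt (fun s => N * (s - R)) N s := by
      simpa using ((hasDerivAt_id s).sub_const R).const_mul N
    rw [(hlin.exp.const_mul C).deriv]
    ring
  rw [laplacian_comp_norm_sq (φ := fun s => a * Real.exp (N * (s - R))) (by fun_prop),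
    hderiv, hderiv]
  ring

end Laplacian

/-- Classical supersolutions of the Schrödinger equation `Δu = Vu` on `O`: functions in
`C²(O) ∩ C(O̅)` with `Δu ≤ Vu` on `O`. The boundary values are left unprescribed. -/
structure IsSchrodingerSupersolution {E : Type*} [NormedAddCommGroup E] [InnerProductSpace ℝ E]
    [FiniteDimensional ℝ E] (V : E → ℝ) (O : Set E) (u : E → ℝ) : Prop where
  contDiffOn : ContDiffOn ℝ 2 u O
  continuousOn : ContinuousOn u (closure O)
  laplacian_le : ∀ x ∈ O, Δ u x ≤ V x * u x

section MinimumPrinciple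

variable {E : Type*} [NormedAddCommGroup E] [InnerProductSpace ℝ E] [FiniteDimensional ℝ E]
  {O : Set E} {V u : E → ℝ} {x : E}

theorem nonneg_of_laplacian_neg_of_neg (hO : IsOpen O) (hbdd : Bornology.IsBounded O)
    (hdiff : ContDiffOn ℝ 2 u O) (hcont : ContinuousOn u (closure O))
    (hlap : ∀ y ∈ O, u y < 0 → Δ u y < 0) (hfr : ∀ y ∈ frontier O, 0 ≤ u y)
    (hx : x ∈ closure O) : 0 ≤ u x := by
  obtain ⟨z, hz, hzmin⟩ := hbdd.isCompact_closure.exists_isMinOn ⟨x, hx⟩ hcont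
  refine le_trans ?_ (hzmin hx)
  by_contra! hneg
  have hzO : z ∈ O := by
    by_contra hzO
    exact hneg.not_ge (hfr z (hO.frontier_eq ▸ ⟨hz, hzO⟩))
  have hnhds : O ∈ 𝓝 z := hO.mem_nhds hzO
  exact (hlap z hzO hneg).not_ge (laplacian_nonneg_of_isLocalMin
    (hzmin.isLocalMin (mem_of_superset hnhds subset_closure)) (hdiff.contDiffAt hnhds))

namespace IsSchrodingerSupersolution

theorem sub (hO : IsOpen O) (hu : IsSchrodingerSupersolution V O u) {v : E → ℝ}
    (hv : ContDiff ℝ 2 v) (hle : ∀ y ∈ O, V y * v y ≤ Δ v y) :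
    IsSchrodingerSupersolution V O (u - v) where
  contDiffOn := hu.contDiffOn.sub hv.contDiffOn
  continuousOn := hu.continuousOn.sub hv.continuous.continuousOn
  laplacian_le y hy := by
    rw [(hu.contDiffOn.contDiffAt (hO.mem_nhds hy)).laplacian_sub hv.contDiffAt, Pi.sub_apply,
      mul_sub]
    exact sub_le_sub (hu.laplacian_le y hy) (hle y hy)

variable [Nontrivial E]

theorem nonneg_of_frontier_nonneg (hO : IsOpen O) (hbdd : Bornology.IsBounded O)
    (hu : IsSchrodingerSupersolution V O u) (hV : ∀ y ∈ O, 0 ≤ V y)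
    (hfr : ∀ y ∈ frontier O, 0 ≤ u y) (hx : x ∈ closure O) : 0 ≤ u x := by
  obtain ⟨R, hR⟩ := hbdd.closure.exists_norm_le
  have hperturbed (ε : ℝ) (hε : 0 < ε) : 0 ≤ u x + ε * (R ^ 2 - ‖x‖ ^ 2) := by
    set p : E → ℝ := fun y => ε * (R ^ 2 - ‖y‖ ^ 2)
    have hp : ContDiff ℝ 2 p := contDiff_const.mul (contDiff_const.sub (contDiff_norm_sq ℝ))
    have hp_nonneg (y) (hy : y ∈ closure O) : 0 ≤ p y :=
      mul_nonneg hε.le (sub_nonneg.mpr (pow_le_pow_left₀ (norm_nonneg y) (hR y hy) 2))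
    have hp_lap (y) : Δ p y < 0 := by
      rw [laplacian_mul_sub_norm_sq, neg_neg_iff_pos]
      exact mul_pos (mul_pos two_pos (Nat.cast_pos.mpr Module.finrank_pos)) hε
    refine nonneg_of_laplacian_neg_of_neg (u := u + p) hO hbdd (hu.contDiffOn.add hp.contDiffOn)
      (hu.continuousOn.add hp.continuous.continuousOn) (fun y hy hneg => ?_)
      (fun y hy => add_nonneg (hfr y hy) (hp_nonneg y (frontier_subset_closure hy))) hx
    have hu_neg : u y < 0 := by
      linarith [hp_nonneg y (subset_closure hy), show u y + p y < 0 from hneg]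
    rw [(hu.contDiffOn.contDiffAt (hO.mem_nhds hy)).laplacian_add hp.contDiffAt]
    linarith [hu.laplacian_le y hy, mul_nonpos_of_nonneg_of_nonpos (hV y hy) hu_neg.le, hp_lap y]
  have hlim : Tendsto (fun ε => u x + ε * (R ^ 2 - ‖x‖ ^ 2)) (𝓝[>] 0) (𝓝 (u x)) :=
    (Continuous.tendsto' (by fun_prop) _ _ (by simp)).mono_left nhdsWithin_le_nhds
  exact ge_of_tendsto hlim (eventually_mem_nhdsWithin.mono hperturbed)

theorem gaussian_le (hO : IsOpen O) (hu : IsSchrodingerSupersolution V O u) {a N R : ℝ}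
    (ha : 0 ≤ a) (hR : ∀ y ∈ closure O, ‖y‖ ≤ R) (hV : ∀ y ∈ O, 0 ≤ V y)
    (hN : ∀ y ∈ O, V y ≤ 2 * Module.finrank ℝ E * N) (hfr : ∀ y ∈ frontier O, a ≤ u y)
    (hx : x ∈ O) : a * Real.exp (N * (‖x‖ ^ 2 - R ^ 2)) ≤ u x := by
  have hbdd : Bornology.IsBounded O :=
    isBounded_iff_forall_norm_le.mpr ⟨R, fun y hy => hR y (subset_closure hy)⟩
  have hN_nonneg : 0 ≤ N :=
    nonneg_of_mul_nonneg_right ((hV x hx).trans (hN x hx))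
      (mul_pos two_pos (Nat.cast_pos.mpr Module.finrank_pos))
  set v : E → ℝ := fun y => a * Real.exp (N * (‖y‖ ^ 2 - R ^ 2))
  have hsubsolution (y) (hy : y ∈ O) : V y * v y ≤ Δ v y := by
    rw [laplacian_gaussian]
    refine mul_le_mul_of_nonneg_right ?_ (by positivity)
    calc V y ≤ 2 * Module.finrank ℝ E * N := hN y hy
      _ ≤ 2 * Module.finrank ℝ E * N + 4 * N ^ 2 * ‖y‖ ^ 2 :=
          le_add_of_nonneg_right (by positivity)
      _ = 2 * N * (Module.finrank ℝ E + 2 * N * ‖y‖ ^ 2) := by ring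
  have hboundary (y) (hy : y ∈ frontier O) : v y ≤ a := by
    have hsq : ‖y‖ ^ 2 ≤ R ^ 2 :=
      pow_le_pow_left₀ (norm_nonneg y) (hR y (frontier_subset_closure hy)) 2
    exact mul_le_of_le_one_right ha (Real.exp_le_one_iff.mpr
      (mul_nonpos_of_nonneg_of_nonpos hN_nonneg (sub_nonpos.mpr hsq)))
  have hsub : IsSchrodingerSupersolution V O (u - v) :=
    hu.sub hO (contDiff_gaussian a N (R ^ 2)) hsubsolution
  have hnonneg : 0 ≤ (u - v) x := hsub.nonneg_of_frontier_nonneg hO hbdd hV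
    (fun y hy => sub_nonneg.mpr ((hboundary y hy).trans (hfr y hy))) (subset_closure hx)
  exact sub_nonneg.mp hnonneg

theorem mul_exp_neg_le (hO : IsOpen O) {f : E → ℝ}
    (hu : IsSchrodingerSupersolution (fun y => 2 * f y) O u) {a R S : ℝ} (ha : 0 ≤ a)
    (hR : ∀ y ∈ closure O, ‖y‖ ≤ R) (hf : ∀ y ∈ O, 0 ≤ f y) (hS : ∀ y ∈ O, f y ≤ S)
    (hfr : ∀ y ∈ frontier O, a ≤ u y) (hx : x ∈ O) :
    a * Real.exp (-(R ^ 2 / Module.finrank ℝ E * S)) ≤ u x := by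
  have hdim : (0 : ℝ) < Module.finrank ℝ E := Nat.cast_pos.mpr Module.finrank_pos
  have hS_nonneg : 0 ≤ S := (hf x hx).trans (hS x hx)
  calc a * Real.exp (-(R ^ 2 / Module.finrank ℝ E * S))
      ≤ a * Real.exp (S / Module.finrank ℝ E * (‖x‖ ^ 2 - R ^ 2)) := by
        gcongr
        linarith [mul_nonneg (div_nonneg hS_nonneg hdim.le) (sq_nonneg ‖x‖),
          div_mul_comm (R ^ 2) (Module.finrank ℝ E : ℝ) S]
    _ ≤ u x := hu.gaussian_le hO ha hR (fun y hy => mul_nonneg zero_le_two (hf y hy))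
        (fun y hy => by rw [mul_assoc, mul_div_cancel₀ _ hdim.ne']; linarith [hS y hy]) hfr hx

end IsSchrodingerSupersolution

end MinimumPrinciple

theorem lap_eq_laplacian (d : ℕ) (u : EuclideanSpace ℝ (Fin d) → ℝ) : lap d u = Δ u := by
  rw [laplacian_eq_iteratedFDeriv_orthonormalBasis u (EuclideanSpace.basisFun (Fin d) ℝ)]
  simp only [funext_iff, lap, EuclideanSpace.basisFun_apply, implies_true]

theorem IsSolutionSchrBVP.isSchrodingerSupersolution {d : ℕ}
    {O : Set (EuclideanSpace ℝ (Fin d))} {f g u : EuclideanSpace ℝ (Fin d) → ℝ}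
    (hu : IsSolutionSchrBVP d O f g u) :
    IsSchrodingerSupersolution (fun y => 2 * f y) O u where
  contDiffOn := hu.1
  continuousOn := hu.2.1
  laplacian_le x hx := by
    rw [← lap_eq_laplacian]
    exact (sub_eq_zero.mp (hu.2.2.1 x hx)).le

theorem schrodinger_solution_positive_lower_bound_general {E : Type*} [NormedAddCommGroup E]
    [InnerProductSpace ℝ E] [FiniteDimensional ℝ E] [Nontrivial E] {O : Set E} (hO : IsOpen O)
    (hbdd : Bornology.IsBounded O) :
    ∃ c : ℝ, 0 < c ∧ ∀ f : E → ℝ, BddAbove ((fun y => |f y|) '' O) → (∀ x ∈ O, 0 ≤ f x) →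
      ∀ a : ℝ, 0 < a → ∀ u : E → ℝ, IsSchrodingerSupersolution (fun y => 2 * f y) O u →
        (∀ x ∈ frontier O, a ≤ u x) → ∀ x ∈ O,
          a * Real.exp (-(c * sSup ((fun y => |f y|) '' O))) ≤ u x ∧ 0 < u x := by
  obtain ⟨R, hR_pos, hR⟩ := hbdd.closure.exists_pos_norm_le
  refine ⟨R ^ 2 / Module.finrank ℝ E,
    div_pos (by positivity) (Nat.cast_pos.mpr Module.finrank_pos), ?_⟩
  intro f hf_bdd hf a ha u hu hfr x hx
  have hle := hu.mul_exp_neg_le hO ha.le hR hf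
    (fun y hy => (le_abs_self _).trans (le_csSup hf_bdd ⟨y, hy, rfl⟩)) hfr hx
  exact ⟨hle, (mul_pos ha (Real.exp_pos _)).trans_le hle⟩

theorem schrodinger_solution_positive_lower_bound (d : ℕ) (hd : 1 ≤ d)
    (O : Set (EuclideanSpace ℝ (Fin d))) (hOopen : IsOpen O)
    (hObdd : Bornology.IsBounded O) (hOne : O.Nonempty)
    (hOsm : HasSmoothBoundary d O) :
    ∃ c : ℝ, 0 < c ∧
      ∀ f : EuclideanSpace ℝ (Fin d) → ℝ, ContinuousOn f (closure O) →
        (∃ M : ℝ, ∀ x ∈ closure O, |f x| ≤ M) → (∀ x ∈ closure O, 0 ≤ f x) →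
      ∀ gmin : ℝ, 0 < gmin →
      ∀ g : EuclideanSpace ℝ (Fin d) → ℝ, ContinuousOn g (frontier O) →
        (∀ x ∈ frontier O, gmin ≤ g x) →
      ∀ u : EuclideanSpace ℝ (Fin d) → ℝ, IsSolutionSchrBVP d O f g u →
        ∀ x ∈ O,
          gmin * Real.exp (-(c * sSup ((fun y => |f y|) '' O))) ≤ u x ∧ 0 < u x := by
  have : Nonempty (Fin d) := ⟨⟨0, hd⟩⟩
  obtain ⟨c, hc, hbound⟩ := schrodinger_solution_positive_lower_bound_general hOopen hObdd
  exact ⟨c, hc, fun f _ ⟨M, hM⟩ hf a ha g _ hg u hu => hbound f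
    ⟨M, Set.forall_mem_image.mpr fun y hy => hM y (subset_closure hy)⟩
    (fun y hy => hf y (subset_closure hy)) a ha u hu.isSchrodingerSupersolution
    fun y hy => (hg y hy).trans_eq (hu.2.2.2 y hy).symm⟩
end
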